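/- Let d ≥ 1, λ ≥ 0, K ≥ 0, and let φ : ℝ^d → ℝ be K-Lipschitz and λ-concave. For ε > 0 let u^ε_t be the Cole–Hopf function. Suppose X, Z : [0,∞) → ℝ^d are differentiable curves such that for every t > 0 the function u^ε_t is differentiable at X(t) and at Z(t) with X'(t) = ∇u^ε_t(X(t)) and Z'(t) = ∇u^ε_t(Z(t)). Then for all 0 ≤ s ≤ t: ‖X(t) − Z(t)‖/(1+λt) ≤ ‖X(s) − Z(s)‖/(1+λs); in particular ‖X(t) − Z(t)‖/(1+λt) ≤ ‖X(0) − Z(0)‖. -/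

import Mathlib

open MeasureTheory
noncomputable section

/-- The Cole–Hopf function. -/
def coleHopf {d : ℕ} (φ : EuclideanSpace ℝ (Fin d) → ℝ) (ε t : ℝ)
    (x : EuclideanSpace ℝ (Fin d)) : ℝ :=
  -ε * Real.log ((2 * Real.pi * ε * t) ^ (-(d : ℝ) / 2) *
    ∫ y : EuclideanSpace ℝ (Fin d),
      Real.exp (-‖x - y‖ ^ 2 / (2 * ε * t) - φ y / ε))

/-- Integrability of the Cole–Hopf integrand. -/
theorem ch_integrable {d : ℕ} (K : ℝ) (φ : EuclideanSpace ℝ (Fin d) → ℝ)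
    (hLip : ∀ y z, |φ y - φ z| ≤ K * ‖y - z‖) (ε t : ℝ) (hε : 0 < ε) (ht : 0 < t)
    (x : EuclideanSpace ℝ (Fin d)) :
    Integrable (fun y : EuclideanSpace ℝ (Fin d) =>
      Real.exp (-‖x - y‖ ^ 2 / (2 * ε * t) - φ y / ε)) := by
  have hcont : Continuous φ := by
    have : LipschitzWith (Real.toNNReal K) φ := by
      apply LipschitzWith.of_dist_le_mul
      intro y z
      rw [Real.dist_eq, dist_eq_norm]
      refine (hLip y z).trans ?_
      gcongr
      exact Real.le_coe_toNNReal K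
    exact this.continuous
  have hb : 0 < 1 / (4 * ε * t) := by positivity
  have hG : Integrable (fun v : EuclideanSpace ℝ (Fin d) =>
      Real.exp (-(1 / (4 * ε * t)) * ‖v‖ ^ 2)) := by
    have h := (GaussianFourier.integrable_cexp_neg_mul_sq_norm_add
      (b := ((1 / (4 * ε * t) : ℝ) : ℂ)) (by rw [Complex.ofReal_re]; exact hb) 0
      (0 : EuclideanSpace ℝ (Fin d))).re
    refine h.congr (Filter.Eventually.of_forall fun v => ?_)
    have : (-((1 / (4 * ε * t) : ℝ) : ℂ) * (‖v‖ : ℂ) ^ 2 +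
        0 * ((inner ℝ (0 : EuclideanSpace ℝ (Fin d)) v : ℝ) : ℂ))
        = ((-(1 / (4 * ε * t)) * ‖v‖ ^ 2 : ℝ) : ℂ) := by
      push_cast; ring
    simp only [this]
    exact Complex.exp_ofReal_re _
  have hG2 := (hG.comp_sub_left x).const_mul (Real.exp (K ^ 2 * t / ε - φ x / ε))
  refine hG2.mono' (by fun_prop) (Filter.Eventually.of_forall fun y => ?_)
  rw [Real.norm_of_nonneg (Real.exp_pos _).le, ← Real.exp_add]
  apply Real.exp_le_exp.mpr
  have h1 := (abs_le.mp (hLip x y)).2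
  set n := ‖x - y‖
  have key : K * n ≤ n ^ 2 / (4 * t) + K ^ 2 * t := by
    have : n ^ 2 / (4 * t) + K ^ 2 * t - K * n = (n / 2 - K * t) ^ 2 / t := by
      field_simp; ring
    have h2 : 0 ≤ (n / 2 - K * t) ^ 2 / t := by positivity
    linarith
  have h3 : -n ^ 2 / (2 * t) - φ y ≤ K ^ 2 * t - φ x + -(1 / (4 * t)) * n ^ 2 := by
    have : -n ^ 2 / (2 * t) = - (n ^ 2 / (4 * t)) - (1 / (4 * t)) * n ^ 2 := by field_simp; ring
    rw [this]; linarith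
  have h4 := div_le_div_of_nonneg_right h3 hε.le
  calc _ = (-n ^ 2 / (2 * t) - φ y) / ε := by field_simp
    _ ≤ _ := h4
    _ = _ := by field_simp

/-- Completing the square. -/
theorem ch_square {d : ℕ} (lam t : ℝ) (hlam : 0 ≤ lam) (ht : 0 < t)
    (x z : EuclideanSpace ℝ (Fin d)) :
    ‖x - (z + (1 / (1 + lam * t)) • x)‖ ^ 2 / (2 * t)
      + lam / 2 * ‖z + (1 / (1 + lam * t)) • x‖ ^ 2
    = (1 + lam * t) / (2 * t) * ‖z‖ ^ 2 + lam / (1 + lam * t) / 2 * ‖x‖ ^ 2 := by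
  have hm : 0 < 1 + lam * t := by positivity
  have e : x - (z + (1 / (1 + lam * t)) • x) = (1 - 1 / (1 + lam * t)) • x - z := by
    module
  rw [e, norm_sub_sq_real, norm_add_sq_real, norm_smul, norm_smul, inner_smul_left,
    inner_smul_right, mul_pow, mul_pow, Real.norm_eq_abs, Real.norm_eq_abs, sq_abs, sq_abs,
    real_inner_comm z x]
  simp only [conj_trivial]
  field_simp
  ring

/-- The Cole–Hopf function is `lam / (1 + lam t)`-concave. -/
theorem ch_concave {d : ℕ} (lam K : ℝ) (hlam : 0 ≤ lam)
    (φ : EuclideanSpace ℝ (Fin d) → ℝ)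
    (hLip : ∀ y z, |φ y - φ z| ≤ K * ‖y - z‖)
    (hConc : ConcaveOn ℝ Set.univ (fun y => φ y - lam / 2 * ‖y‖ ^ 2))
    (ε t : ℝ) (hε : 0 < ε) (ht : 0 < t) :
    ConcaveOn ℝ Set.univ
      (fun x => coleHopf φ ε t x - lam / (1 + lam * t) / 2 * ‖x‖ ^ 2) := by
  have hm : 0 < 1 + lam * t := by positivity
  set r := 1 / (1 + lam * t) with hr
  set κ := lam / (1 + lam * t) / 2 with hκ
  let A : EuclideanSpace ℝ (Fin d) → EuclideanSpace ℝ (Fin d) → ℝ := fun x z =>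
    -‖x - (z + r • x)‖ ^ 2 / (2 * ε * t) - φ (z + r • x) / ε
  have hA : ∀ x z, ε * A x z = -((1 + lam * t) / (2 * t) * ‖z‖ ^ 2) - κ * ‖x‖ ^ 2
      - (φ (z + r • x) - lam / 2 * ‖z + r • x‖ ^ 2) := by
    intro x z
    have h := ch_square lam t hlam ht x z
    have : ε * A x z = -(‖x - (z + r • x)‖ ^ 2 / (2 * t)) - φ (z + r • x) := by
      simp only [A]; field_simp
    rw [this]
    rw [← hr, ← hκ] at h
    linarith
  have hintg : ∀ x, Integrable (fun z => Real.exp (A x z)) := fun x =>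
    (ch_integrable K φ hLip ε t hε ht x).comp_add_right (r • x)
  let I : EuclideanSpace ℝ (Fin d) → ℝ := fun x => ∫ z, Real.exp (A x z)
  have hI : ∀ x, 0 < I x := fun x => integral_exp_pos (hintg x)
  have hC : 0 < (2 * Real.pi * ε * t) ^ (-(d : ℝ) / 2) := by positivity
  have hu : ∀ x, coleHopf φ ε t x =
      -ε * Real.log ((2 * Real.pi * ε * t) ^ (-(d : ℝ) / 2)) - ε * Real.log (I x) := by
    intro x
    have : ∫ y : EuclideanSpace ℝ (Fin d),
        Real.exp (-‖x - y‖ ^ 2 / (2 * ε * t) - φ y / ε) = I x :=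
      (integral_add_right_eq_self (fun y : EuclideanSpace ℝ (Fin d) =>
        Real.exp (-‖x - y‖ ^ 2 / (2 * ε * t) - φ y / ε)) (r • x)).symm
    rw [coleHopf, this, Real.log_mul hC.ne' (hI x).ne']
    ring
  refine ⟨convex_univ, ?_⟩
  intro x _ y _ a b ha hb hab
  simp only [smul_eq_mul]
  rw [hu, hu, hu]
  set p := a • x + b • y with hp
  let Q : ℝ := (a * (κ * ‖x‖ ^ 2) + b * (κ * ‖y‖ ^ 2) - κ * ‖p‖ ^ 2) / ε
  have hQ : ε * Q = a * (κ * ‖x‖ ^ 2) + b * (κ * ‖y‖ ^ 2) - κ * ‖p‖ ^ 2 := by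
    simp only [Q]; field_simp
  have hAp : ∀ z, A p z ≤ a * A x z + b * A y z + Q := by
    intro z
    have h := hConc.2 (Set.mem_univ (z + r • x)) (Set.mem_univ (z + r • y)) ha hb hab
    have e : a • (z + r • x) + b • (z + r • y) = z + r • p := by
      have : z = (a + b) • z := by rw [hab, one_smul]
      conv_rhs => rw [this]
      rw [hp]; module
    rw [e] at h
    simp only [smul_eq_mul] at h
    have h1 := hA x z
    have h2 := hA y z
    have h3 := hA p z
    refine le_of_mul_le_mul_left ?_ hε
    have h4 : ε * (a * A x z + b * A y z + Q) = a * (ε * A x z) + b * (ε * A y z) + ε * Q := by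
      ring
    rw [h4, h1, h2, h3, hQ]
    obtain rfl : b = 1 - a := by linarith
    linarith
  let N : ℝ := a * Real.log (I x) + b * Real.log (I y) + Q
  have hpt : ∀ z, Real.exp (A p z) ≤
      Real.exp N * (a * (Real.exp (A x z) / I x) + b * (Real.exp (A y z) / I y)) := by
    intro z
    have hc := convexOn_exp.2 (Set.mem_univ (A x z - Real.log (I x)))
      (Set.mem_univ (A y z - Real.log (I y))) ha hb hab
    simp only [smul_eq_mul] at hc
    rw [Real.exp_sub (A x z), Real.exp_sub (A y z), Real.exp_log (hI x), Real.exp_log (hI y)] at hc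
    calc Real.exp (A p z) ≤ Real.exp (N + (a * (A x z - Real.log (I x))
          + b * (A y z - Real.log (I y)))) := by
          apply Real.exp_le_exp.mpr
          have := hAp z
          simp only [N]
          linarith
      _ = Real.exp N * _ := Real.exp_add _ _
      _ ≤ _ := mul_le_mul_of_nonneg_left hc (Real.exp_pos _).le
  have hix := ((hintg x).div_const (I x)).const_mul a
  have hiy := ((hintg y).div_const (I y)).const_mul b
  have hle : I p ≤ Real.exp N := by
    calc I p ≤ ∫ z, Real.exp N *
          (a * (Real.exp (A x z) / I x) + b * (Real.exp (A y z) / I y)) :=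
          integral_mono (hintg p) ((hix.add hiy).const_mul _) hpt
      _ = Real.exp N * (a * (I x / I x) + b * (I y / I y)) := by
          rw [integral_const_mul, integral_add hix hiy, integral_const_mul, integral_const_mul,
            integral_div, integral_div]
      _ = Real.exp N := by
          rw [div_self (hI x).ne', div_self (hI y).ne', mul_one, mul_one, hab, mul_one]
  have hlog : Real.log (I p) ≤ N := (Real.log_le_iff_le_exp (hI p)).mpr hle
  have h5 := mul_le_mul_of_nonneg_left hlog hε.le
  have h6 : ε * N = a * (ε * Real.log (I x)) + b * (ε * Real.log (I y)) + ε * Q := by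
    simp only [N]; ring
  rw [h6, hQ] at h5
  obtain rfl : b = 1 - a := by linarith
  linarith

/-- One-sided Lipschitz bound for gradients of semiconcave functions. -/
theorem ch_mono {d : ℕ} (u : EuclideanSpace ℝ (Fin d) → ℝ) (c : ℝ)
    (h : ConcaveOn ℝ Set.univ (fun x => u x - c / 2 * ‖x‖ ^ 2))
    (x z : EuclideanSpace ℝ (Fin d)) (hx : DifferentiableAt ℝ u x)
    (hz : DifferentiableAt ℝ u z) :
    inner ℝ (x - z) (gradient u x - gradient u z) ≤ c * ‖x - z‖ ^ 2 := by
  have hl : ∀ s : ℝ, HasDerivAt (fun s : ℝ => AffineMap.lineMap z x s) (x - z) s := fun s =>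
    AffineMap.hasDerivAt_lineMap
  have hf := h.comp_affineMap (AffineMap.lineMap z x : ℝ →ᵃ[ℝ] EuclideanSpace ℝ (Fin d))
  rw [Set.preimage_univ] at hf
  have hd : ∀ s : ℝ, DifferentiableAt ℝ u (AffineMap.lineMap z x s) →
      HasDerivAt ((fun x => u x - c / 2 * ‖x‖ ^ 2) ∘
        (AffineMap.lineMap z x : ℝ →ᵃ[ℝ] EuclideanSpace ℝ (Fin d)))
      (inner ℝ (gradient u (AffineMap.lineMap z x s)) (x - z)
        - c / 2 * (2 * inner ℝ (AffineMap.lineMap z x s) (x - z))) s := by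
    intro s hs
    have h1 := hs.hasGradientAt.hasFDerivAt.comp_hasDerivAt s (hl s)
    have h2 := (hl s).norm_sq.const_mul (c / 2)
    have h3 := h1.sub h2
    rw [InnerProductSpace.toDual_apply_apply] at h3
    exact h3
  have h0 := hd 0 (by simpa using hz)
  have h1 := hd 1 (by simpa using hx)
  have k0 := hf.slope_le_of_hasDerivAt (Set.mem_univ 0) (Set.mem_univ 1) one_pos h0
  have k1 := hf.le_slope_of_hasDerivAt (Set.mem_univ 0) (Set.mem_univ 1) one_pos h1
  have k := k1.trans k0
  rw [AffineMap.lineMap_apply_one, AffineMap.lineMap_apply_zero] at k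
  have e : ‖x - z‖ ^ 2 = inner ℝ x (x - z) - inner ℝ z (x - z) := by
    rw [← inner_sub_left, real_inner_self_eq_norm_sq]
  rw [e, real_inner_comm, inner_sub_left]
  linarith

theorem stmt4 (d : ℕ) (hd : 1 ≤ d) (lam K : ℝ) (hlam : 0 ≤ lam) (hK : 0 ≤ K)
    (φ : EuclideanSpace ℝ (Fin d) → ℝ)
    (hLip : ∀ y z, |φ y - φ z| ≤ K * ‖y - z‖)
    (hConc : ConcaveOn ℝ Set.univ (fun y => φ y - lam / 2 * ‖y‖ ^ 2))
    (ε : ℝ) (hε : 0 < ε)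
    (X Z : ℝ → EuclideanSpace ℝ (Fin d))
    (hXdiff : DifferentiableOn ℝ X (Set.Ici (0 : ℝ)))
    (hZdiff : DifferentiableOn ℝ Z (Set.Ici (0 : ℝ)))
    (hX : ∀ t : ℝ, 0 < t → DifferentiableAt ℝ (coleHopf φ ε t) (X t) ∧
      HasDerivAt X (gradient (coleHopf φ ε t) (X t)) t)
    (hZ : ∀ t : ℝ, 0 < t → DifferentiableAt ℝ (coleHopf φ ε t) (Z t) ∧
      HasDerivAt Z (gradient (coleHopf φ ε t) (Z t)) t) :
    ∀ s t : ℝ, 0 ≤ s → s ≤ t →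
      ‖X t - Z t‖ / (1 + lam * t) ≤ ‖X s - Z s‖ / (1 + lam * s) ∧
      ‖X t - Z t‖ / (1 + lam * t) ≤ ‖X 0 - Z 0‖ := by
  have hpos : ∀ t : ℝ, 0 ≤ t → 0 < 1 + lam * t := fun t ht => by positivity
  have hanti : AntitoneOn (fun t : ℝ => ‖X t - Z t‖ ^ 2 / (1 + lam * t) ^ 2) (Set.Ici 0) := by
    have hD : ∀ t : ℝ, 0 < t → HasDerivAt (fun t : ℝ => ‖X t - Z t‖ ^ 2 / (1 + lam * t) ^ 2)
        ((2 * inner ℝ (X t - Z t) (gradient (coleHopf φ ε t) (X t) -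
          gradient (coleHopf φ ε t) (Z t)) * (1 + lam * t) ^ 2 -
          ‖X t - Z t‖ ^ 2 * (2 * (1 + lam * t) * lam)) / ((1 + lam * t) ^ 2) ^ 2) t := by
      intro t ht
      have h1 := ((hX t ht).2.sub (hZ t ht).2).norm_sq
      have h2 : HasDerivAt (fun t : ℝ => (1 + lam * t) ^ 2) (2 * (1 + lam * t) * lam) t := by
        have h3 : HasDerivAt (fun t : ℝ => 1 + lam * t) lam t := by
          simpa using ((hasDerivAt_id t).const_mul lam).const_add 1
        have h4 := h3.pow 2
        norm_num at h4
        exact h4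
      exact h1.div h2 (pow_pos (hpos t ht.le) 2).ne'
    apply antitoneOn_of_deriv_nonpos (convex_Ici 0)
    · refine ContinuousOn.div ?_ (by fun_prop) fun t ht => (pow_pos (hpos t ht) 2).ne'
      exact ((hXdiff.continuousOn.sub hZdiff.continuousOn).norm).pow 2
    · intro t ht
      rw [interior_Ici] at ht
      exact (hD t ht).differentiableAt.differentiableWithinAt
    · intro t ht
      rw [interior_Ici] at ht
      have ht' : 0 < t := ht
      rw [(hD t ht').deriv]
      have hm := hpos t ht'.le
      have hc := ch_mono (coleHopf φ ε t) (lam / (1 + lam * t))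
        (ch_concave lam K hlam φ hLip hConc ε t hε ht') (X t) (Z t) (hX t ht').1 (hZ t ht').1
      apply div_nonpos_of_nonpos_of_nonneg _ (by positivity)
      have h5 := mul_le_mul_of_nonneg_right hc (by positivity : 0 ≤ 2 * (1 + lam * t) ^ 2)
      have h6 : lam / (1 + lam * t) * ‖X t - Z t‖ ^ 2 * (2 * (1 + lam * t) ^ 2)
          = ‖X t - Z t‖ ^ 2 * (2 * (1 + lam * t) * lam) := by
        field_simp
      linarith
  have main : ∀ s t : ℝ, 0 ≤ s → s ≤ t →
      ‖X t - Z t‖ / (1 + lam * t) ≤ ‖X s - Z s‖ / (1 + lam * s) := by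
    intro s t hs hst
    have h := hanti hs (hs.trans hst : (0 : ℝ) ≤ t) hst
    simp only [← div_pow] at h
    exact (pow_le_pow_iff_left₀ (div_nonneg (norm_nonneg _) (hpos t (hs.trans hst)).le)
      (div_nonneg (norm_nonneg _) (hpos s hs).le) two_ne_zero).mp h
  intro s t hs hst
  refine ⟨main s t hs hst, ?_⟩
  simpa using main 0 t le_rfl (hs.trans hst)
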